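/- Assume dim Γ_∞(f) = n and let γ be a face of Γ_∞(f) with 0 ∈ γ which is NOT atypical. Let ℝ^S be the minimal coordinate subspace of ℝ^n containing γ. Then dim γ = |S|; moreover, for each i ∉ S the set Γ_i = Γ_∞(f) ∩ {v ∈ ℝ^n : v_i = 0} is a facet of Γ_∞(f) containing γ, the sets Γ_i (i ∉ S) are pairwise distinct, and every facet of Γ_∞(f) containing γ equals Γ_i for some i ∉ S; in particular there exist exactly n − |S| facets of Γ_∞(f) containing γ. -/

import Mathlib

open scoped Classical

noncomputable section

/-- Dot product on `ℝⁿ`. -/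
def dotR {n : ℕ} (u v : Fin n → ℝ) : ℝ := ∑ i, u i * v i

/-- The image in `ℝⁿ` of the support of a polynomial. -/
def realSupp {n : ℕ} (f : MvPolynomial (Fin n) ℂ) : Set (Fin n → ℝ) :=
  (fun v : Fin n →₀ ℕ => fun i => (v i : ℝ)) '' {v | MvPolynomial.coeff v f ≠ 0}

/-- The Newton polyhedron at infinity `Γ_∞(f)`. -/
def NPinf {n : ℕ} (f : MvPolynomial (Fin n) ℂ) : Set (Fin n → ℝ) :=
  convexHull ℝ ({0} ∪ realSupp f)

/-- The supporting face `γ_u` of `u` in `Γ_∞(f)`. -/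
def suppFace {n : ℕ} (f : MvPolynomial (Fin n) ℂ) (u : Fin n → ℝ) : Set (Fin n → ℝ) :=
  {v ∈ NPinf f | ∀ w ∈ NPinf f, dotR u v ≤ dotR u w}

/-- A face of `Γ_∞(f)` is any set of the form `γ_u`. -/
def IsFaceOf {n : ℕ} (f : MvPolynomial (Fin n) ℂ) (γ : Set (Fin n → ℝ)) : Prop :=
  ∃ u : Fin n → ℝ, γ = suppFace f u

/-- Dimension of a subset of `ℝⁿ`: the dimension of its affine span. -/
def setDim {n : ℕ} (s : Set (Fin n → ℝ)) : ℕ :=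
  Module.finrank ℝ (affineSpan ℝ s).direction

/-- A face `γ` of `Γ_∞(f)` with `0 ∈ γ` is atypical if some facet of `Γ_∞(f)`
containing `γ` has all its nonzero inner conormal vectors outside `ℝ_{≥0}ⁿ`. -/
def IsAtypicalFace {n : ℕ} (f : MvPolynomial (Fin n) ℂ) (γ : Set (Fin n → ℝ)) : Prop :=
  IsFaceOf f γ ∧ (0 : Fin n → ℝ) ∈ γ ∧
    ∃ Γf : Set (Fin n → ℝ), IsFaceOf f Γf ∧ setDim Γf = n - 1 ∧ γ ⊆ Γf ∧
      ∀ u : Fin n → ℝ, u ≠ 0 → suppFace f u = Γf → ¬ (∀ i, 0 ≤ u i)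

/-- The cone `σ(γ)` of the dual fan of `Γ_∞(f)` corresponding to the face `γ`. -/
def sigmaCone {n : ℕ} (f : MvPolynomial (Fin n) ℂ) (γ : Set (Fin n → ℝ)) : Set (Fin n → ℝ) :=
  closure {u : Fin n → ℝ | suppFace f u = γ}

/-- The coordinate subspace `ℝ^S` of `ℝⁿ`. -/
def coordSub {n : ℕ} (S : Finset (Fin n)) : Set (Fin n → ℝ) :=
  {v | ∀ i ∉ S, v i = 0}

/-- The `γ`-part `f_γ` of `f`. -/
def facePart {n : ℕ} (f : MvPolynomial (Fin n) ℂ) (γ : Set (Fin n → ℝ)) :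
    MvPolynomial (Fin n) ℂ :=
  ∑ v ∈ f.support,
    if (fun i => (v i : ℝ)) ∈ γ then MvPolynomial.monomial v (MvPolynomial.coeff v f) else 0

/-- `f` is non-degenerate at infinity. -/
def NondegAtInfty {n : ℕ} (f : MvPolynomial (Fin n) ℂ) : Prop :=
  ∀ γ : Set (Fin n → ℝ), IsFaceOf f γ → (0 : Fin n → ℝ) ∉ γ →
    ∀ x : Fin n → ℂ, (∀ i, x i ≠ 0) → MvPolynomial.eval x (facePart f γ) = 0 →
      ∃ i, MvPolynomial.eval x (MvPolynomial.pderiv i (facePart f γ)) ≠ 0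

/-- `Δ_γ`: the convex hull of `{0} ∪ γ`. -/
def DeltaG {n : ℕ} (γ : Set (Fin n → ℝ)) : Set (Fin n → ℝ) :=
  convexHull ℝ ({0} ∪ γ)

/-- The lattice `M_γ = ℤⁿ ∩ L(Δ_γ)`. -/
def Mgamma {n : ℕ} (γ : Set (Fin n → ℝ)) : AddSubgroup (Fin n → ℤ) where
  carrier := {v | (fun i => (v i : ℝ)) ∈ Submodule.span ℝ (DeltaG γ)}
  add_mem' := by
    intro a b ha hb
    have h : (fun i => (((a + b) : Fin n → ℤ) i : ℝ))
        = (fun i => (a i : ℝ)) + fun i => (b i : ℝ) := by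
      funext i; push_cast [Pi.add_apply]; ring
    simp only [Set.mem_setOf_eq, h]
    exact Submodule.add_mem _ ha hb
  zero_mem' := by
    have h : (fun i => (((0 : Fin n → ℤ)) i : ℝ)) = (0 : Fin n → ℝ) := by
      funext i; simp
    simp only [Set.mem_setOf_eq, h]
    exact Submodule.zero_mem _
  neg_mem' := by
    intro a ha
    have h : (fun i => (((-a) : Fin n → ℤ) i : ℝ)) = -(fun i => (a i : ℝ)) := by
      funext i; push_cast [Pi.neg_apply]; ring
    simp only [Set.mem_setOf_eq, h]
    exact Submodule.neg_mem _ ha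

def dotL {n : ℕ} (u : Fin n → ℝ) : (Fin n → ℝ) →ₗ[ℝ] ℝ where
  toFun v := dotR u v
  map_add' x y := by simp [dotR, mul_add, Finset.sum_add_distrib]
  map_smul' c x := by
    simp only [dotR, Pi.smul_apply, smul_eq_mul, RingHom.id_apply, Finset.mul_sum]
    exact Finset.sum_congr rfl fun i _ => by ring

lemma dotL_apply {n : ℕ} (u v : Fin n → ℝ) : dotL u v = dotR u v := rfl

lemma dotR_add {n : ℕ} (u w v : Fin n → ℝ) : dotR (u + w) v = dotR u v + dotR w v := by
  simp [dotR, add_mul, Finset.sum_add_distrib]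

lemma dotR_smul {n : ℕ} (c : ℝ) (u v : Fin n → ℝ) : dotR (c • u) v = c * dotR u v := by
  simp only [dotR, Pi.smul_apply, smul_eq_mul, Finset.mul_sum]
  exact Finset.sum_congr rfl fun i _ => by ring

lemma dotR_single {n : ℕ} (i : Fin n) (v : Fin n → ℝ) : dotR (Pi.single i 1) v = v i := by
  simp [dotR, Pi.single_apply]

lemma dotR_single_right {n : ℕ} (i : Fin n) (v : Fin n → ℝ) : dotR v (Pi.single i 1) = v i := by
  simp [dotR, Pi.single_apply]

lemma dotR_zero {n : ℕ} (u : Fin n → ℝ) : dotR u 0 = 0 := by simp [dotR]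

lemma dotL_surj {n : ℕ} (φ : (Fin n → ℝ) →ₗ[ℝ] ℝ) : ∃ w, φ = dotL w := by
  refine ⟨fun i => φ (Pi.single i 1), ?_⟩
  apply LinearMap.pi_ext'
  intro i
  ext
  simp [dotL_apply, dotR_single_right]

lemma setDim_eq {n : ℕ} {s : Set (Fin n → ℝ)} (h : (0 : Fin n → ℝ) ∈ s) :
    setDim s = Module.finrank ℝ (Submodule.span ℝ s) := by
  unfold setDim
  rw [direction_affineSpan, vectorSpan_eq_span_vsub_set_right ℝ h]
  have he : (fun x : Fin n → ℝ => x -ᵥ (0 : Fin n → ℝ)) '' s = s := by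
    ext v
    constructor
    · rintro ⟨x, hx, rfl⟩
      have : x -ᵥ (0 : Fin n → ℝ) = x := sub_zero x
      show x -ᵥ (0 : Fin n → ℝ) ∈ s
      rw [this]; exact hx
    · intro hv
      exact ⟨v, hv, sub_zero v⟩
  exact congrArg (fun t => Module.finrank ℝ (Submodule.span ℝ t)) he

lemma span_le_ker {n : ℕ} {s : Set (Fin n → ℝ)} {u : Fin n → ℝ} (h : ∀ v ∈ s, dotR u v = 0) :
    Submodule.span ℝ s ≤ LinearMap.ker (dotL u) :=
  Submodule.span_le.2 fun v hv => h v hv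

lemma dotL_ne {n : ℕ} {u : Fin n → ℝ} (hu : u ≠ 0) : dotL u ≠ 0 := by
  intro h
  apply hu
  funext i
  have := LinearMap.congr_fun h (Pi.single i 1)
  simpa [dotL_apply, dotR_single_right] using this

lemma finrank_ker_dotL {n : ℕ} {u : Fin n → ℝ} (hu : u ≠ 0) :
    Module.finrank ℝ (LinearMap.ker (dotL u)) = n - 1 := by
  have h := LinearMap.finrank_range_add_finrank_ker (dotL u)
  have h2 : LinearMap.range (dotL u) = ⊤ := LinearMap.range_eq_top.2
    (LinearMap.surjective (dotL_ne hu))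
  rw [h2] at h
  simp at h
  omega

lemma exists_sep {n : ℕ} (L : Submodule ℝ (Fin n → ℝ)) (x : Fin n → ℝ) (hx : x ∉ L) :
    ∃ w, (∀ v ∈ L, dotR w v = 0) ∧ dotR w x ≠ 0 := by
  obtain ⟨φ, h1, h2⟩ := Submodule.exists_le_ker_of_notMem hx
  obtain ⟨w, rfl⟩ := dotL_surj φ
  exact ⟨w, fun v hv => h2 hv, h1⟩

lemma facet_span {n : ℕ} {s : Set (Fin n → ℝ)} (h0 : (0 : Fin n → ℝ) ∈ s)
    (hd : setDim s = n - 1) {u : Fin n → ℝ} (hu : u ≠ 0) (h : ∀ v ∈ s, dotR u v = 0) :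
    Submodule.span ℝ s = LinearMap.ker (dotL u) := by
  apply Submodule.eq_of_le_of_finrank_eq (span_le_ker h)
  rw [← setDim_eq h0, hd, finrank_ker_dotL hu]

lemma prop_of_ker {n : ℕ} {u w : Fin n → ℝ} (hu : u ≠ 0)
    (h : ∀ v, dotR u v = 0 → dotR w v = 0) : ∃ c : ℝ, w = c • u := by
  obtain ⟨x, hx⟩ : ∃ x, dotR u x ≠ 0 := by
    by_contra! hc
    exact dotL_ne hu (LinearMap.ext hc)
  refine ⟨dotR w x / dotR u x, ?_⟩
  funext i
  have := h (Pi.single i 1 - (u i / dotR u x) • x) (by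
    rw [← dotL_apply, map_sub, map_smul, dotL_apply, dotL_apply, dotR_single_right]
    simp [hx])
  rw [← dotL_apply, map_sub, map_smul, dotL_apply, dotL_apply, dotR_single_right] at this
  simp only [smul_eq_mul, Pi.smul_apply] at *
  rw [sub_eq_zero] at this
  rw [this]; ring

lemma prop_of_facet {n : ℕ} {s : Set (Fin n → ℝ)} (h0 : (0 : Fin n → ℝ) ∈ s)
    (hd : setDim s = n - 1) {u w : Fin n → ℝ} (hu : u ≠ 0) (h : ∀ v ∈ s, dotR u v = 0)
    (hw : ∀ v ∈ s, dotR w v = 0) : ∃ c : ℝ, w = c • u := by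
  apply prop_of_ker hu
  intro v hv
  have h1 := facet_span h0 hd hu h
  have h2 : v ∈ Submodule.span ℝ s := by rw [h1]; exact hv
  exact span_le_ker hw h2

/-- One step: moving from `u` in direction `w` until hitting a wall. -/
lemma step {n : ℕ} (A : Finset (Fin n → ℝ)) (u w : Fin n → ℝ)
    (hu : ∀ a ∈ A, 0 ≤ dotR u a) (hw : ∀ a ∈ A, dotR u a = 0 → dotR w a = 0)
    (hneg : ∃ a ∈ A, dotR w a < 0) :
    ∃ t : ℝ, 0 < t ∧ (∀ a ∈ A, 0 ≤ dotR (u + t • w) a) ∧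
      ∃ a ∈ A, dotR u a ≠ 0 ∧ dotR (u + t • w) a = 0 := by
  have hne : (A.filter fun a => dotR w a < 0).Nonempty := by
    obtain ⟨a, h1, h2⟩ := hneg
    exact ⟨a, by simp [h1, h2]⟩
  obtain ⟨a, ha, hmin⟩ := Finset.exists_min_image _ (fun a => dotR u a / (- dotR w a)) hne
  simp only [Finset.mem_filter] at ha hmin
  obtain ⟨haA, haw⟩ := ha
  have hua : 0 < dotR u a := lt_of_le_of_ne (hu a haA) fun h => by
    have := hw a haA h.symm
    linarith
  have hw' : 0 < - dotR w a := by linarith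
  refine ⟨dotR u a / (- dotR w a), by positivity, ?_, a, haA, hua.ne', ?_⟩
  · intro b hb
    rw [dotR_add, dotR_smul]
    by_cases hbw : dotR w b < 0
    · have h1 := hmin b ⟨hb, hbw⟩
      rw [le_div_iff₀ (by linarith)] at h1
      linarith
    · have : 0 ≤ dotR u a / (- dotR w a) * dotR w b :=
        mul_nonneg (by positivity) (not_lt.1 hbw)
      linarith [hu b hb]
  · rw [dotR_add, dotR_smul]
    have : dotR w a ≠ 0 := haw.ne
    field_simp
    ring

lemma cone_gen {n : ℕ} (A : Finset (Fin n → ℝ)) (B : Set (Fin n → ℝ))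
    (hBA : ∀ a ∈ B, a ∈ A)
    (hA : ∀ w, (∀ a ∈ A, dotR w a = 0) → w = 0)
    (K : Set (Fin n → ℝ)) (hK0 : 0 ∈ K) (hKadd : ∀ x ∈ K, ∀ y ∈ K, x + y ∈ K)
    (hKs : ∀ x ∈ K, ∀ c : ℝ, 0 ≤ c → c • x ∈ K)
    (hK : ∀ u, u ≠ 0 → (∀ a ∈ A, 0 ≤ dotR u a) → (∀ a ∈ B, dotR u a = 0) →
      (∀ w, (∀ a ∈ A, dotR u a = 0 → dotR w a = 0) → ∃ c : ℝ, w = c • u) → u ∈ K) :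
    ∀ (m : ℕ) (u : Fin n → ℝ), (A.filter fun a => dotR u a ≠ 0).card ≤ m →
      (∀ a ∈ A, 0 ≤ dotR u a) → (∀ a ∈ B, dotR u a = 0) → u ∈ K := by
  intro m
  induction m with
  | zero =>
    intro u hm _ _
    have : u = 0 := hA u fun a ha => by
      by_contra hc
      have : a ∈ A.filter fun a => dotR u a ≠ 0 := by simp [ha, hc]
      rw [Finset.card_eq_zero.1 (Nat.le_zero.1 hm)] at this
      simp at this
    rw [this]; exact hK0
  | succ m ih =>
    intro u hm hu hB
    by_cases hu0 : u = 0
    · rw [hu0]; exact hK0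
    by_cases hext : ∀ w, (∀ a ∈ A, dotR u a = 0 → dotR w a = 0) → ∃ c : ℝ, w = c • u
    · exact hK u hu0 hu hB hext
    push Not at hext
    obtain ⟨w, hw, hwc⟩ := hext
    have hsum : 0 < ∑ a ∈ A, dotR u a := by
      refine lt_of_le_of_ne (Finset.sum_nonneg hu) fun h => hu0 ?_
      exact hA u ((Finset.sum_eq_zero_iff_of_nonneg hu).1 h.symm)
    obtain ⟨c, hc⟩ : ∃ c : ℝ, c = (∑ a ∈ A, dotR w a) / (∑ a ∈ A, dotR u a) := ⟨_, rfl⟩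
    obtain ⟨w', hw'⟩ : ∃ w', w' = w + (-c) • u := ⟨_, rfl⟩
    have hw'0 : w' ≠ 0 := by
      intro h
      apply hwc c
      rw [hw'] at h
      rw [neg_smul] at h
      exact add_neg_eq_zero.1 h
    have hw'Z : ∀ a ∈ A, dotR u a = 0 → dotR w' a = 0 := by
      intro a ha h
      rw [hw', dotR_add, dotR_smul, hw a ha h, h]; ring
    have hw'sum : ∑ a ∈ A, dotR w' a = 0 := by
      simp only [hw', dotR_add, dotR_smul, Finset.sum_add_distrib, ← Finset.mul_sum]
      rw [hc]; field_simp; ring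
    have key : ∀ z : Fin n → ℝ, z ≠ 0 → (∑ a ∈ A, dotR z a = 0) →
        (∀ a ∈ A, dotR u a = 0 → dotR z a = 0) → ∃ t : ℝ, 0 < t ∧ u + t • z ∈ K := by
      intro z hz0 hzs hzZ
      have hneg : ∃ a ∈ A, dotR z a < 0 := by
        by_contra! hcon
        exact hz0 (hA z ((Finset.sum_eq_zero_iff_of_nonneg hcon).1 hzs))
      obtain ⟨t, ht, hpos, a, ha, hua, hza⟩ := step A u z hu hzZ hneg
      have hZ : ∀ b ∈ A, dotR u b = 0 → dotR (u + t • z) b = 0 := by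
        intro b hb h
        rw [dotR_add, dotR_smul, h, hzZ b hb h]; ring
      refine ⟨t, ht, ih _ ?_ hpos fun b hb => hZ b (hBA b hb) (hB b hb)⟩
      have : (A.filter fun a => dotR (u + t • z) a ≠ 0) ⊂ (A.filter fun a => dotR u a ≠ 0) := by
        rw [Finset.ssubset_iff_of_subset]
        · exact ⟨a, by simp [ha, hua], by simp [hza]⟩
        · intro b hb
          simp only [Finset.mem_filter] at hb ⊢
          exact ⟨hb.1, fun h => hb.2 (hZ b hb.1 h)⟩
      have := Finset.card_lt_card this
      omega
    obtain ⟨t, ht, h1⟩ := key w' hw'0 hw'sum hw'Z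
    have hdn : ∀ a, dotR (-w') a = - dotR w' a := fun a => by simp [dotR]
    obtain ⟨s, hs, h2⟩ := key (-w') (neg_ne_zero.2 hw'0) (by simp [hdn, hw'sum])
      (fun a ha h => by rw [hdn, hw'Z a ha h, neg_zero])
    have h3 := hKadd _ (hKs _ h1 (s / (s + t)) (by positivity)) _
      (hKs _ h2 (t / (s + t)) (by positivity))
    convert h3 using 1
    funext i
    simp only [Pi.add_apply, Pi.smul_apply, Pi.neg_apply, smul_eq_mul]
    field_simp
    ring

lemma NPinf_nonneg {n : ℕ} (f : MvPolynomial (Fin n) ℂ) (u : Fin n → ℝ)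
    (hu : ∀ a ∈ realSupp f, 0 ≤ dotR u a) : ∀ v ∈ NPinf f, 0 ≤ dotR u v := by
  have hc : Convex ℝ {v | 0 ≤ dotR u v} := convex_halfSpace_ge (dotL u).isLinear 0
  refine convexHull_min ?_ hc
  rintro v (rfl | hv)
  · exact (dotR_zero u).ge
  · exact hu v hv

lemma zero_mem_NP {n : ℕ} (f : MvPolynomial (Fin n) ℂ) : (0 : Fin n → ℝ) ∈ NPinf f :=
  subset_convexHull ℝ _ (Or.inl rfl)

lemma supp_sub_NP {n : ℕ} (f : MvPolynomial (Fin n) ℂ) : realSupp f ⊆ NPinf f :=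
  fun _ h => subset_convexHull ℝ _ (Or.inr h)

lemma suppFace_eq {n : ℕ} (f : MvPolynomial (Fin n) ℂ) (u : Fin n → ℝ)
    (hu : ∀ v ∈ NPinf f, 0 ≤ dotR u v) : suppFace f u = {v ∈ NPinf f | dotR u v = 0} := by
  ext v
  constructor
  · rintro ⟨h1, h2⟩
    refine ⟨h1, le_antisymm ?_ (hu v h1)⟩
    simpa [dotR_zero] using h2 0 (zero_mem_NP f)
  · rintro ⟨h1, h2⟩
    exact ⟨h1, fun w hw => by rw [h2]; exact hu w hw⟩

lemma coord_nonneg {n : ℕ} (f : MvPolynomial (Fin n) ℂ) (v : Fin n → ℝ) (hv : v ∈ NPinf f)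
    (i : Fin n) : 0 ≤ v i := by
  have := NPinf_nonneg f (Pi.single i 1) (by
    rintro _ ⟨a, _, rfl⟩
    rw [dotR_single]; positivity) v hv
  rwa [dotR_single] at this

lemma suppFace_single {n : ℕ} (f : MvPolynomial (Fin n) ℂ) (i : Fin n) :
    suppFace f (Pi.single i 1) = NPinf f ∩ {v : Fin n → ℝ | v i = 0} := by
  rw [suppFace_eq f _ fun v hv => by rw [dotR_single]; exact coord_nonneg f v hv i]
  simp only [dotR_single]
  rfl

lemma single_ne {n : ℕ} (i : Fin n) : (Pi.single i 1 : Fin n → ℝ) ≠ 0 := by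
  intro h
  have := congrFun h i
  simp at this

lemma face_u_nonneg {n : ℕ} (f : MvPolynomial (Fin n) ℂ) (u : Fin n → ℝ)
    (h0 : (0 : Fin n → ℝ) ∈ suppFace f u) : ∀ v ∈ NPinf f, 0 ≤ dotR u v := by
  intro v hv
  simpa [dotR_zero] using h0.2 v hv

/-- If a face `γ` of `Γ_∞(f)` with `0 ∈ γ` is not atypical and `ℝ^S` is the minimal
coordinate subspace containing `γ`, then `dim γ = |S|` and the facets of `Γ_∞(f)`
containing `γ` are exactly the `n - |S|` pairwise distinct sets
`Γ_i = Γ_∞(f) ∩ {v : v_i = 0}` for `i ∉ S`. -/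
theorem facets_of_non_atypical_face {n : ℕ} (f : MvPolynomial (Fin n) ℂ)
    (hdim : setDim (NPinf f) = n) (γ : Set (Fin n → ℝ))
    (hγ : IsFaceOf f γ) (h0 : (0 : Fin n → ℝ) ∈ γ)
    (hnot : ¬ IsAtypicalFace f γ)
    (S : Finset (Fin n)) (hS : γ ⊆ coordSub S)
    (hmin : ∀ S' : Finset (Fin n), γ ⊆ coordSub S' → S ⊆ S') :
    setDim γ = S.card ∧
    (∀ i ∉ S, IsFaceOf f (NPinf f ∩ {v : Fin n → ℝ | v i = 0}) ∧
      setDim (NPinf f ∩ {v : Fin n → ℝ | v i = 0}) = n - 1 ∧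
      γ ⊆ NPinf f ∩ {v : Fin n → ℝ | v i = 0}) ∧
    (∀ i ∉ S, ∀ j ∉ S,
      NPinf f ∩ {v : Fin n → ℝ | v i = 0} = NPinf f ∩ {v : Fin n → ℝ | v j = 0} → i = j) ∧
    (∀ Γf : Set (Fin n → ℝ), IsFaceOf f Γf → setDim Γf = n - 1 → γ ⊆ Γf →
      ∃ i ∉ S, Γf = NPinf f ∩ {v : Fin n → ℝ | v i = 0}) ∧
    {Γf : Set (Fin n → ℝ) | IsFaceOf f Γf ∧ setDim Γf = n - 1 ∧ γ ⊆ Γf}.ncard = n - S.card := by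
  classical
  have hfin : (realSupp f).Finite := by
    apply Set.Finite.image
    have : {v | MvPolynomial.coeff v f ≠ 0} = (f.support : Set (Fin n →₀ ℕ)) := by
      ext v; simp
    rw [this]; exact f.support.finite_toSet
  obtain ⟨A, hAdef⟩ : ∃ A : Finset (Fin n → ℝ), (A : Set (Fin n → ℝ)) = realSupp f :=
    ⟨hfin.toFinset, by simp⟩
  have hmemA : ∀ a, a ∈ A ↔ a ∈ realSupp f := fun a => by rw [← hAdef]; simp
  have hspanA : ∀ w, (∀ a ∈ A, dotR w a = 0) → w = 0 := by
    intro w hw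
    by_contra hne
    have h1 : ∀ v ∈ NPinf f, dotR w v = 0 := by
      intro v hv
      apply le_antisymm
      · have := NPinf_nonneg f ((-1 : ℝ) • w) (fun a ha => by
          rw [dotR_smul, hw a ((hmemA a).2 ha)]; simp) v hv
        rw [dotR_smul] at this; linarith
      · exact NPinf_nonneg f w (fun a ha => by rw [hw a ((hmemA a).2 ha)]) v hv
    rw [setDim_eq (zero_mem_NP f)] at hdim
    have h2 := Submodule.finrank_mono (span_le_ker h1)
    rw [hdim, finrank_ker_dotL hne] at h2
    apply hne
    funext i
    have := i.pos
    omega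
  obtain ⟨u0, hu0⟩ := hγ
  have hu0n := face_u_nonneg f u0 (hu0 ▸ h0)
  have hγeq : γ = {v ∈ NPinf f | dotR u0 v = 0} := hu0.trans (suppFace_eq f u0 hu0n)
  have hγP : γ ⊆ NPinf f := by rw [hγeq]; exact fun v h => h.1
  have hSi : ∀ i, (∀ v ∈ γ, v i = 0) → i ∉ S := by
    intro i hi hiS
    have := hmin (Finset.univ.erase i) (fun v hv j hj => by
      have : j = i := by simpa using hj
      rw [this]; exact hi v hv) hiS
    simp at this
  -- part 4
  have part4 : ∀ Γf : Set (Fin n → ℝ), IsFaceOf f Γf → setDim Γf = n - 1 → γ ⊆ Γf →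
      ∃ i ∉ S, Γf = NPinf f ∩ {v : Fin n → ℝ | v i = 0} := by
    intro G hG hGd hGγ
    have hex : ∃ u : Fin n → ℝ, u ≠ 0 ∧ suppFace f u = G ∧ ∀ i, 0 ≤ u i := by
      by_contra! hcon
      refine hnot ⟨⟨u0, hu0⟩, h0, G, hG, hGd, hGγ, fun u h1 h2 h3 => ?_⟩
      obtain ⟨i, hi⟩ := hcon u h1 h2
      linarith [h3 i]
    obtain ⟨u, hune, huG, hupos⟩ := hex
    have h0G := hGγ h0
    have hun := face_u_nonneg f u (huG.symm ▸ h0G)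
    have hGeq := huG.symm.trans (suppFace_eq f u hun)
    obtain ⟨i, hi⟩ : ∃ i, u i ≠ 0 := by
      by_contra! hc
      exact hune (funext hc)
    have hvi : ∀ v ∈ G, v i = 0 := by
      intro v hv
      rw [hGeq] at hv
      have h1 := (Finset.sum_eq_zero_iff_of_nonneg (fun j _ =>
        mul_nonneg (hupos j) (coord_nonneg f v hv.1 j))).1 hv.2 i (Finset.mem_univ i)
      exact (mul_eq_zero.1 h1).resolve_left hi
    obtain ⟨c, hc⟩ := prop_of_facet h0G hGd (single_ne i) (w := u)
      (fun v hv => by rw [dotR_single]; exact hvi v hv)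
      (fun v hv => by rw [hGeq] at hv; exact hv.2)
    refine ⟨i, hSi i fun v hv => hvi v (hGγ hv), ?_⟩
    apply Set.Subset.antisymm
    · intro v hv
      exact ⟨by rw [hGeq] at hv; exact hv.1, hvi v hv⟩
    · rintro v ⟨h1, h2⟩
      rw [hGeq]
      refine ⟨h1, ?_⟩
      rw [hc, dotR_smul, dotR_single]
      simp only [Set.mem_setOf_eq] at h2
      rw [h2, mul_zero]
  have pert : ∀ w : Fin n → ℝ, (∀ a ∈ A, a ∈ γ → dotR w a = 0) →
      ∃ ε : ℝ, 0 < ε ∧ ∀ a ∈ A, 0 ≤ dotR (u0 + ε • w) a := by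
    intro w hwγ
    have hZ : ∀ a ∈ A, dotR u0 a = 0 → dotR w a = 0 := fun a ha h => hwγ a ha (by
      rw [hγeq]; exact ⟨supp_sub_NP f ((hmemA a).1 ha), h⟩)
    have hu0A : ∀ a ∈ A, 0 ≤ dotR u0 a := fun a ha =>
      hu0n a (supp_sub_NP f ((hmemA a).1 ha))
    by_cases hneg : ∃ a ∈ A, dotR w a < 0
    · obtain ⟨t, ht, h, _⟩ := step A u0 w hu0A hZ hneg
      exact ⟨t, ht, h⟩
    · push Not at hneg
      refine ⟨1, one_pos, fun a ha => ?_⟩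
      rw [dotR_add, dotR_smul, one_mul]
      exact add_nonneg (hu0A a ha) (hneg a ha)
  -- generation of the dual cone
  have gen : ∀ u : Fin n → ℝ, (∀ a ∈ A, 0 ≤ dotR u a) → (∀ a ∈ A, a ∈ γ → dotR u a = 0) →
      ∀ i, 0 ≤ u i ∧ (u i ≠ 0 → i ∉ S ∧
        setDim (NPinf f ∩ {v : Fin n → ℝ | v i = 0}) = n - 1) := by
    intro u hu hB
    refine cone_gen A {a | a ∈ A ∧ a ∈ γ} (fun a h => h.1) hspanA
      {u | ∀ i, 0 ≤ u i ∧ (u i ≠ 0 → i ∉ S ∧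
        setDim (NPinf f ∩ {v : Fin n → ℝ | v i = 0}) = n - 1)} ?_ ?_ ?_ ?_ _ u le_rfl hu
        (fun a h => hB a h.1 h.2)
    · intro i; simp
    · intro x hx y hy i
      refine ⟨add_nonneg (hx i).1 (hy i).1, fun h => ?_⟩
      by_cases hxi : x i = 0
      · exact (hy i).2 fun h' => h (by simp [hxi, h'])
      · exact (hx i).2 hxi
    · intro x hx c hc i
      refine ⟨mul_nonneg hc (hx i).1, fun h => (hx i).2 fun h' => h (by simp [h'])⟩
    · intro u hune hu hB hext
      have hun := NPinf_nonneg f u (fun a ha => hu a ((hmemA a).2 ha))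
      have hFeq := suppFace_eq f u hun
      have h0F : (0 : Fin n → ℝ) ∈ suppFace f u := by
        rw [hFeq]; exact ⟨zero_mem_NP f, dotR_zero u⟩
      have hF0 : ∀ v ∈ suppFace f u, dotR u v = 0 := fun v hv => by
        rw [hFeq] at hv; exact hv.2
      have hd : setDim (suppFace f u) = n - 1 := by
        rw [setDim_eq h0F, ← finrank_ker_dotL hune]
        suffices hle : LinearMap.ker (dotL u) ≤ Submodule.span ℝ (suppFace f u) by
          rw [le_antisymm (span_le_ker hF0) hle]
        intro x hx
        by_contra hxn
        obtain ⟨w, hw1, hw2⟩ := exists_sep _ x hxn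
        obtain ⟨c, hc⟩ := hext w fun a ha h => hw1 a (Submodule.subset_span (by
          rw [hFeq]; exact ⟨supp_sub_NP f ((hmemA a).1 ha), h⟩))
        apply hw2
        rw [hc, dotR_smul]
        have : dotR u x = 0 := hx
        rw [this, mul_zero]
      have hγF : γ ⊆ suppFace f u := by
        intro v hv
        obtain ⟨ε, hε, hεA⟩ := pert ((-1 : ℝ) • u) fun a ha h => by
          rw [dotR_smul, hB a ⟨ha, h⟩, mul_zero]
        have h1 := NPinf_nonneg f _ (fun a ha => hεA a ((hmemA a).2 ha)) v (hγP hv)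
        have h2 := hun v (hγP hv)
        have h3 : dotR u0 v = 0 := by rw [hγeq] at hv; exact hv.2
        rw [dotR_add, dotR_smul, dotR_smul, h3] at h1
        rw [hFeq]
        exact ⟨hγP hv, by nlinarith⟩
      obtain ⟨i, hiS, hi⟩ := part4 _ ⟨u, rfl⟩ hd hγF
      obtain ⟨c, hc⟩ := prop_of_facet h0F hd (single_ne i) (w := u)
        (fun v hv => by rw [dotR_single]; rw [hi] at hv; exact hv.2) hF0
      have hcpos : 0 ≤ c := by
        by_contra hneg
        apply hune
        apply hspanA
        intro a ha
        have h1 := hu a ha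
        have h2 := coord_nonneg f a (supp_sub_NP f ((hmemA a).1 ha)) i
        rw [hc, dotR_smul, dotR_single] at h1 ⊢
        nlinarith
      intro j
      rw [hc]
      by_cases hj : j = i
      · subst hj
        refine ⟨by simpa using hcpos, fun _ => ⟨hiS, hi ▸ hd⟩⟩
      · simp [Pi.single_apply, hj]
  have hu0D := gen u0 (fun a ha => hu0n a (supp_sub_NP f ((hmemA a).1 ha)))
    (fun a _ h => by rw [hγeq] at h; exact h.2)
  have part2 : ∀ i ∉ S, IsFaceOf f (NPinf f ∩ {v : Fin n → ℝ | v i = 0}) ∧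
      setDim (NPinf f ∩ {v : Fin n → ℝ | v i = 0}) = n - 1 ∧
      γ ⊆ NPinf f ∩ {v : Fin n → ℝ | v i = 0} := by
    intro i hi
    refine ⟨⟨_, (suppFace_single f i).symm⟩, ?_, fun v hv => ⟨hγP hv, hS hv i hi⟩⟩
    refine ((gen (Pi.single i 1) (fun a ha => ?_) (fun a _ h => ?_) i).2 (by simp)).2
    · rw [dotR_single]
      exact coord_nonneg f a (supp_sub_NP f ((hmemA a).1 ha)) i
    · rw [dotR_single]; exact hS h i hi
  have part3 : ∀ i ∉ S, ∀ j ∉ S,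
      NPinf f ∩ {v : Fin n → ℝ | v i = 0} = NPinf f ∩ {v : Fin n → ℝ | v j = 0} → i = j := by
    intro i hi j hj hij
    obtain ⟨_, hd, hg⟩ := part2 i hi
    obtain ⟨c, hc⟩ := prop_of_facet (hg h0) hd (single_ne i) (w := Pi.single j 1)
      (fun v hv => by rw [dotR_single]; exact hv.2)
      (fun v hv => by rw [dotR_single]; rw [hij] at hv; exact hv.2)
    by_contra hne
    have := congrFun hc j
    simp [Pi.single_apply, Ne.symm hne] at this
  refine ⟨?_, part2, part3, part4, ?_⟩
  · rw [setDim_eq h0]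
    have hspan : Submodule.span ℝ γ =
        Submodule.span ℝ (Set.range fun i : S => (Pi.single (i : Fin n) 1 : Fin n → ℝ)) := by
      apply le_antisymm
      · refine Submodule.span_le.2 fun v hv => ?_
        have h1 : v = ∑ i ∈ S, v i • (Pi.single i 1 : Fin n → ℝ) := by
          funext j
          by_cases hj : j ∈ S
          · simp [Finset.sum_apply, Pi.single_apply, hj]
          · simp [Finset.sum_apply, Pi.single_apply, hj, hS hv j hj]
        rw [h1]
        exact Submodule.sum_mem _ fun i hi => Submodule.smul_mem _ _
          (Submodule.subset_span ⟨⟨i, hi⟩, rfl⟩)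
      · rw [Submodule.span_le]
        rintro _ ⟨⟨i, hi⟩, rfl⟩
        by_contra hx
        obtain ⟨w, hw1, hw2⟩ := exists_sep _ _ hx
        rw [dotR_single_right] at hw2
        have hwγ : ∀ v ∈ γ, dotR w v = 0 := fun v hv => hw1 v (Submodule.subset_span hv)
        -- small perturbation
        obtain ⟨ε, hε, hεA⟩ := pert w fun a _ h => hwγ a h
        have h1 := gen (u0 + ε • w) hεA (fun a _ h => by
          rw [dotR_add, dotR_smul, hwγ a h]
          rw [hγeq] at h; rw [h.2]; ring) i
        have h2 : u0 i = 0 := by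
          by_contra hc; exact ((hu0D i).2 hc).1 hi
        have h3 : (u0 + ε • w) i = 0 := by
          by_contra hc; exact (h1.2 hc).1 hi
        simp [h2, hε.ne', hw2] at h3
    rw [hspan, finrank_span_eq_card]
    · simp
    · have := (Pi.basisFun ℝ (Fin n)).linearIndependent.comp (fun i : S => (i : Fin n))
        Subtype.val_injective
      convert this using 1
      funext i
      simp
  · have hset : {Γf : Set (Fin n → ℝ) | IsFaceOf f Γf ∧ setDim Γf = n - 1 ∧ γ ⊆ Γf} =
        (fun i => NPinf f ∩ {v : Fin n → ℝ | v i = 0}) '' ((Sᶜ : Finset (Fin n)) : Set (Fin n)) := by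
      ext G
      constructor
      · rintro ⟨h1, h2, h3⟩
        obtain ⟨i, hi, rfl⟩ := part4 G h1 h2 h3
        exact ⟨i, by simpa using hi, rfl⟩
      · rintro ⟨i, hi, rfl⟩
        exact part2 i (by simpa using hi)
    rw [hset, Set.ncard_image_of_injOn, Set.ncard_coe_finset, Finset.card_compl, Fintype.card_fin]
    intro i hi j hj h
    exact part3 i (by simpa using hi) j (by simpa using hj) h
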